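/- arXiv:1701.06082 — 6 statements merged into one kernel-verified Lean document; each statement's English description precedes it below -/
import Mathlib

section
/- Let R be a commutative ring with identity, M a unitary R-module, and N a complementary submodule of M. If (N : M) is a primal ideal of R, then N is a primal submodule of M. -/
/-- `S(N)` for a submodule `N` of `M`: the set of elements of `R` not prime to `N`. -/
def notPrimeTo {R : Type*} [CommRing R] {M : Type*} [AddCommGroup M] [Module R M]
    (N : Submodule R M) : Set R :=
  {r : R | ∃ m : M, m ∉ N ∧ r • m ∈ N}

/-- `S(I)` for an ideal `I` of `R`. -/
def notPrimeToIdeal {R : Type*} [CommRing R] (I : Ideal R) : Set R :=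
  {r : R | ∃ s : R, s ∉ I ∧ r * s ∈ I}

/-- A proper submodule `N` of `M` is *primal* if `S(N)` forms an ideal of `R`. -/
def IsPrimalSubmodule {R : Type*} [CommRing R] {M : Type*} [AddCommGroup M] [Module R M]
    (N : Submodule R M) : Prop :=
  N ≠ ⊤ ∧ ∃ I : Ideal R, (I : Set R) = notPrimeTo N

/-- A proper ideal `I` of `R` is *primal* if `S(I)` forms an ideal of `R`. -/
def IsPrimalIdeal {R : Type*} [CommRing R] (I : Ideal R) : Prop :=
  I ≠ ⊤ ∧ ∃ J : Ideal R, (J : Set R) = notPrimeToIdeal I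

/-- A proper submodule `N` of `M` is *complementary* if whenever `r • x ∉ N` for some
`x ∉ N`, then `r • y ∉ N` for all `y ∉ N`. -/
def IsComplementarySubmodule {R : Type*} [CommRing R] {M : Type*} [AddCommGroup M] [Module R M]
    (N : Submodule R M) : Prop :=
  N ≠ ⊤ ∧ ∀ r : R, (∃ x : M, x ∉ N ∧ r • x ∉ N) → ∀ y : M, y ∉ N → r • y ∉ N

section

variable {R : Type*} [CommRing R] {M : Type*} [AddCommGroup M] [Module R M] {N : Submodule R M}

theorem colon_subset_notPrimeTo (hN : N ≠ ⊤) : (N.colon ⊤ : Set R) ⊆ notPrimeTo N := by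
  intro r hr
  obtain ⟨m, hm⟩ : ∃ m, m ∉ N := SetLike.exists_not_mem_of_ne_top N hN rfl
  exact ⟨m, hm, Submodule.mem_colon.mp hr m trivial⟩

namespace IsComplementarySubmodule

theorem notPrimeTo_subset_colon (hc : IsComplementarySubmodule N) :
    notPrimeTo N ⊆ (N.colon ⊤ : Set R) := by
  rintro r ⟨m, hm, hrm⟩
  refine Submodule.mem_colon.mpr fun x _ ↦ ?_
  by_contra hrx
  have hx : x ∉ N := fun hxN ↦ hrx (N.smul_mem r hxN)
  exact hc.2 r ⟨x, hx, hrx⟩ m hm hrm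

theorem colon_eq_notPrimeTo (hc : IsComplementarySubmodule N) :
    (N.colon ⊤ : Set R) = notPrimeTo N :=
  (colon_subset_notPrimeTo hc.1).antisymm hc.notPrimeTo_subset_colon

end IsComplementarySubmodule

theorem isPrimalSubmodule_of_complementary_general (hc : IsComplementarySubmodule N) :
    IsPrimalSubmodule N :=
  ⟨hc.1, N.colon ⊤, hc.colon_eq_notPrimeTo⟩

end

/-- Proposition 3.6: if `N` is a complementary submodule of `M` and `(N : M)` is a primal
ideal of `R`, then `N` is a primal submodule of `M`. -/
theorem isPrimalSubmodule_of_complementary {R : Type*} [CommRing R] {M : Type*}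
    [AddCommGroup M] [Module R M] (N : Submodule R M) (hc : IsComplementarySubmodule N)
    (h : IsPrimalIdeal (N.colon ⊤)) : IsPrimalSubmodule N := by
  exact isPrimalSubmodule_of_complementary_general hc
end

section
/- Let R be a commutative ring with identity, M a unitary R-module, S a multiplicative closed set in R, and N a proper submodule of M such that S(N) ∩ S = ∅. Then the set of elements of R_S not prime to the localized submodule N_S equals the localization of S(N); that is, S(N_S) = (S(N))_S as subsets of R_S. -/
/-!
For any submodule `P` of `M_S`, a fraction `r/s` is not prime to `P` exactly when `r` is not prime
to the preimage of `P` in `M`, because denominators act invertibly on `M_S`. The condition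
`S(N) ∩ S = ∅` says that elements of `S` can be cancelled modulo `N`, so the preimage of `N_S` is
`N` itself.
-/

section Semimodule

variable {R M M' : Type*} [CommSemiring R] [AddCommMonoid M] [AddCommMonoid M'] [Module R M]
  [Module R M'] {S : Submonoid R} (f : M →ₗ[R] M') [IsLocalizedModule S f]

theorem mk'_mem_iff_apply_mem (A : Type*) [CommSemiring A] [Algebra R A] [IsLocalization S A]
    [Module A M'] [IsScalarTower R A M'] (P : Submodule A M') (m : M) (s : S) :
    IsLocalizedModule.mk' f m s ∈ P ↔ f m ∈ P := by
  rw [← P.smul_mem_iff_of_isUnit (IsLocalization.map_units A s), algebraMap_smul,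
    ← Submonoid.smul_def, IsLocalizedModule.mk'_cancel']

theorem comap_localized₀_eq_self {N : Submodule R M}
    (mem_of_smul_mem : ∀ (s : S) (m : M), s • m ∈ N → m ∈ N) :
    (N.localized₀ S f).comap f = N := by
  refine le_antisymm ?_ (Submodule.map_le_iff_le_comap.mp (N.map_le_localized₀ S f))
  rintro m ⟨n, hn, s, hns⟩
  have f_eq : f n = f (s • m) := by
    rw [IsLocalizedModule.mk'_eq_iff.mp hns, Submonoid.smul_def, Submonoid.smul_def, map_smul]
  obtain ⟨t, ht⟩ := IsLocalizedModule.exists_of_eq (S := S) f_eq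
  have smul_smul_mem : t • s • m ∈ N := ht ▸ N.smul_mem (t : R) hn
  exact mem_of_smul_mem s m (mem_of_smul_mem t _ smul_smul_mem)

end Semimodule

section Module

variable {R M M' : Type*} [CommRing R] [AddCommGroup M] [AddCommGroup M'] [Module R M]
  [Module R M'] {S : Submonoid R}

theorem mem_of_smul_mem_of_disjoint_notPrimeTo {N : Submodule R M}
    (hS : Disjoint (notPrimeTo N) (S : Set R)) (s : S) (m : M) (hsm : s • m ∈ N) : m ∈ N := by
  by_contra hm
  exact hS.notMem_of_mem_left ⟨m, hm, hsm⟩ s.2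

variable (A : Type*) [CommRing A] [Algebra R A] [IsLocalization S A] [Module A M']
  [IsScalarTower R A M'] (f : M →ₗ[R] M') [IsLocalizedModule S f]

theorem mk'_mem_notPrimeTo_iff (P : Submodule A M') (r : R) (s : S) :
    IsLocalization.mk' A r s ∈ notPrimeTo P ↔
      r ∈ notPrimeTo ((P.restrictScalars R).comap f) := by
  constructor
  · rintro ⟨y, hy, hry⟩
    obtain ⟨⟨m, t⟩, rfl⟩ := IsLocalizedModule.mk'_surjective S f y
    rw [Function.uncurry_apply_pair, mk'_mem_iff_apply_mem] at hy
    rw [Function.uncurry_apply_pair, IsLocalizedModule.mk'_smul_mk', mk'_mem_iff_apply_mem] at hry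
    exact ⟨m, hy, hry⟩
  · rintro ⟨m, hm, hrm⟩
    refine ⟨f m, hm, ?_⟩
    rwa [← IsLocalizedModule.mk'_one S f m, IsLocalizedModule.mk'_smul_mk',
      mk'_mem_iff_apply_mem]

theorem notPrimeTo_eq_setOf_mk' (P : Submodule A M') :
    notPrimeTo P =
      {x : A | ∃ r ∈ notPrimeTo ((P.restrictScalars R).comap f), ∃ s : S,
        x = IsLocalization.mk' A r s} := by
  ext x
  constructor
  · intro hx
    obtain ⟨r, s, rfl⟩ := IsLocalization.exists_mk'_eq S x
    exact ⟨r, (mk'_mem_notPrimeTo_iff A f P r s).mp hx, s, rfl⟩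
  · rintro ⟨r, hr, s, rfl⟩
    exact (mk'_mem_notPrimeTo_iff A f P r s).mpr hr

theorem notPrimeTo_localized_eq_general {N : Submodule R M}
    (hS : Disjoint (notPrimeTo N) (S : Set R)) :
    notPrimeTo (N.localized' A S f) =
      {x : A | ∃ r ∈ notPrimeTo N, ∃ s : S, x = IsLocalization.mk' A r s} := by
  rw [notPrimeTo_eq_setOf_mk' (S := S) A f, Submodule.restrictScalars_localized',
    comap_localized₀_eq_self f (mem_of_smul_mem_of_disjoint_notPrimeTo hS)]

end Module

/-- Theorem 3.10: let `S` be a multiplicative closed set in `R` and `N` a proper submodule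
of `M` with `S(N) ∩ S = ∅`.  Then `S(N_S) = (S(N))_S` as subsets of `R_S`, where
`N_S = N.localized S` is the localized submodule `{n/s : n ∈ N, s ∈ S}` of `M_S` and
`(S(N))_S = {r/s : r ∈ S(N), s ∈ S}`. -/
theorem notPrimeTo_localized_eq {R : Type*} [CommRing R] {M : Type*} [AddCommGroup M]
    [Module R M] (S : Submonoid R) (N : Submodule R M) (hN : N ≠ ⊤)
    (hS : notPrimeTo N ∩ (S : Set R) = ∅) :
    notPrimeTo (N.localized S) =
      {x : Localization S | ∃ r ∈ notPrimeTo N, ∃ s : S, x = Localization.mk r s} := by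
  simpa only [Localization.mk_eq_mk'] using
    notPrimeTo_localized_eq_general (Localization S) (LocalizedModule.mkLinearMap S M)
      (Set.disjoint_iff_inter_eq_empty.mpr hS)
end

section
/- Let R be a commutative ring with identity, M a unitary R-module, S a multiplicative closed set in R, and N a proper submodule of M such that S(N) ∩ S = ∅. Then N is a primal submodule of M if and only if N_S is a primal submodule of the R_S-module M_S. (In particular, under these hypotheses N_S is a proper submodule of M_S.) -/
/-!
Since `S(N)` misses `S`, elements of `S` cancel modulo `N`, so a fraction `m/s` lies in `N_S` only
if `m ∈ N`, and consequently `r/s ∈ S(N_S)` if and only if `r ∈ S(N)`. Hence contraction along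
`R → R_S` turns an ideal `S(N_S)` into `S(N)`, and extension turns an ideal `S(N)` into `S(N_S)`;
the latter because the complement of `S(N)` is multiplicatively closed, so that `u * r ∈ S(N)`
with `u ∈ S` forces `r ∈ S(N)`.
-/

section NotPrimeTo

variable {R M : Type*} [CommRing R] [AddCommGroup M] [Module R M] {N : Submodule R M}

theorem smul_mem_iff_of_notMem_notPrimeTo {r : R} (hr : r ∉ notPrimeTo N) {m : M} :
    r • m ∈ N ↔ m ∈ N :=
  ⟨fun hrm => by_contra fun hm => hr ⟨m, hm, hrm⟩, N.smul_mem r⟩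

theorem mem_notPrimeTo_or_mem_notPrimeTo_of_mul_mem {a b : R} (hab : a * b ∈ notPrimeTo N) :
    a ∈ notPrimeTo N ∨ b ∈ notPrimeTo N := by
  obtain ⟨m, hm, habm⟩ := hab
  rw [mul_smul] at habm
  by_cases hbm : b • m ∈ N
  · exact .inr ⟨m, hm, hbm⟩
  · exact .inl ⟨b • m, hbm, habm⟩

end NotPrimeTo

section Localization

variable {R M : Type*} [CommRing R] [AddCommGroup M] [Module R M]
  {S : Submonoid R} (Rₛ : Type*) [CommRing Rₛ] [Algebra R Rₛ] [IsLocalization S Rₛ]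
  {Mₛ : Type*} [AddCommGroup Mₛ] [Module R Mₛ] [Module Rₛ Mₛ] [IsScalarTower R Rₛ Mₛ]
  (f : M →ₗ[R] Mₛ) [IsLocalizedModule S f] {N : Submodule R M}

theorem mk'_mem_localized'_iff_exists_smul_mem {m : M} {s : S} :
    IsLocalizedModule.mk' f m s ∈ N.localized' Rₛ S f ↔ ∃ u : S, u • m ∈ N := by
  rw [Submodule.mem_localized']
  constructor
  · rintro ⟨n, hn, t, hnt⟩
    obtain ⟨u, hu⟩ := (IsLocalizedModule.mk'_eq_mk'_iff f n m t s).mp hnt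
    refine ⟨u * t, ?_⟩
    rw [mul_smul, hu]
    exact N.smul_mem u (N.smul_mem s hn)
  · rintro ⟨u, hu⟩
    exact ⟨u • m, hu, u * s, IsLocalizedModule.mk'_cancel_left f m u s⟩

theorem mk'_mem_localized'_iff (hS : Disjoint (notPrimeTo N) S) {m : M} {s : S} :
    IsLocalizedModule.mk' f m s ∈ N.localized' Rₛ S f ↔ m ∈ N := by
  have smul_mem_iff (u : S) : u • m ∈ N ↔ m ∈ N :=
    smul_mem_iff_of_notMem_notPrimeTo (hS.notMem_of_mem_right u.2)
  simp only [mk'_mem_localized'_iff_exists_smul_mem, smul_mem_iff, exists_const]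

theorem localized'_eq_top_iff (hS : Disjoint (notPrimeTo N) S) :
    N.localized' Rₛ S f = ⊤ ↔ N = ⊤ := by
  simp only [Submodule.eq_top_iff', (IsLocalizedModule.mk'_surjective S f).forall, Prod.forall,
    Function.uncurry_apply_pair, mk'_mem_localized'_iff Rₛ f hS, forall_const]

theorem mk'_mem_notPrimeTo_localized'_iff (hS : Disjoint (notPrimeTo N) S) {r : R} {s : S} :
    IsLocalization.mk' Rₛ r s ∈ notPrimeTo (N.localized' Rₛ S f) ↔ r ∈ notPrimeTo N := by
  simp only [notPrimeTo, Set.mem_ofPred_eq, (IsLocalizedModule.mk'_surjective S f).exists,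
    Prod.exists, Function.uncurry_apply_pair, IsLocalizedModule.mk'_smul_mk',
    mk'_mem_localized'_iff Rₛ f hS, exists_const]

theorem coe_comap_algebraMap_eq_notPrimeTo (hS : Disjoint (notPrimeTo N) S) {J : Ideal Rₛ}
    (hJ : (J : Set Rₛ) = notPrimeTo (N.localized' Rₛ S f)) :
    (J.comap (algebraMap R Rₛ) : Set R) = notPrimeTo N := by
  ext r
  rw [Ideal.coe_comap, Set.mem_preimage, hJ, ← IsLocalization.mk'_one (M := S),
    mk'_mem_notPrimeTo_localized'_iff Rₛ f hS]

theorem coe_map_algebraMap_eq_notPrimeTo_localized' (hS : Disjoint (notPrimeTo N) S)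
    {I : Ideal R} (hI : (I : Set R) = notPrimeTo N) :
    (I.map (algebraMap R Rₛ) : Set Rₛ) = notPrimeTo (N.localized' Rₛ S f) := by
  have mem_iff (r : R) : r ∈ I ↔ r ∈ notPrimeTo N := Set.ext_iff.mp hI r
  ext x
  obtain ⟨r, s, rfl⟩ := IsLocalization.exists_mk'_eq S x
  rw [SetLike.mem_coe, IsLocalization.mk'_mem_map_algebraMap_iff S,
    mk'_mem_notPrimeTo_localized'_iff Rₛ f hS, ← mem_iff]
  constructor
  · rintro ⟨u, hu, hur⟩
    rw [mem_iff] at hur ⊢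
    exact (mem_notPrimeTo_or_mem_notPrimeTo_of_mul_mem hur).resolve_left
      (hS.notMem_of_mem_right hu)
  · exact fun hr => ⟨1, S.one_mem, I.mul_mem_left 1 hr⟩

theorem isPrimalSubmodule_iff_localized_general (hS : Disjoint (notPrimeTo N) S) :
    (N.localized' Rₛ S f = ⊤ ↔ N = ⊤) ∧
      (IsPrimalSubmodule N ↔ IsPrimalSubmodule (N.localized' Rₛ S f)) := by
  have eq_top_iff := localized'_eq_top_iff Rₛ f hS
  refine ⟨eq_top_iff, and_congr eq_top_iff.not.symm ⟨?_, ?_⟩⟩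
  · rintro ⟨I, hI⟩
    exact ⟨I.map (algebraMap R Rₛ), coe_map_algebraMap_eq_notPrimeTo_localized' Rₛ f hS hI⟩
  · rintro ⟨J, hJ⟩
    exact ⟨J.comap (algebraMap R Rₛ), coe_comap_algebraMap_eq_notPrimeTo Rₛ f hS hJ⟩

end Localization

/-- Theorem 3.11: let `S` be a multiplicative closed set in `R` and `N` a proper submodule
of `M` with `S(N) ∩ S = ∅`.  Then `N_S = N.localized S` is a proper submodule of `M_S`, and
`N` is a primal submodule of `M` iff `N_S` is a primal submodule of the `R_S`-module `M_S`. -/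
theorem isPrimalSubmodule_iff_localized {R : Type*} [CommRing R] {M : Type*} [AddCommGroup M]
    [Module R M] (S : Submonoid R) (N : Submodule R M) (hN : N ≠ ⊤)
    (hS : notPrimeTo N ∩ (S : Set R) = ∅) :
    N.localized S ≠ ⊤ ∧ (IsPrimalSubmodule N ↔ IsPrimalSubmodule (N.localized S)) := by
  obtain ⟨eq_top_iff, isPrimal_iff⟩ := isPrimalSubmodule_iff_localized_general (Localization S)
    (LocalizedModule.mkLinearMap S M) (Set.disjoint_iff_inter_eq_empty.mpr hS)
  exact ⟨eq_top_iff.not.mpr hN, isPrimal_iff⟩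
end

section
/- Let R be a commutative ring with identity, M a unitary R-module, S a multiplicative closed set in R, and N a proper submodule of M. Suppose that for each proper submodule K of M and each s ∈ S, (K : s) = K, where (K : s) = {x ∈ M : s·x ∈ K}. Then N is small in M if and only if N_S is small in M_S. -/
/-- A submodule `N` of `M` is *small* (superfluous) in `M`, written `N ≪ M`, if
`N + L ≠ M` for every proper submodule `L` of `M`. -/
def IsSmallSubmodule {R : Type*} [CommRing R] {M : Type*} [AddCommGroup M] [Module R M]
    (N : Submodule R M) : Prop :=
  ∀ L : Submodule R M, L ≠ ⊤ → N ⊔ L ≠ ⊤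

/-!
Localization is a surjective, join-preserving map of submodule lattices. Smallness only speaks of
joins and of `⊤`, so it is preserved and reflected as soon as proper submodules localize to proper
submodules. Now `K_S = M_S` means that every `x ∈ M` is carried into `K` by some `s ∈ S`, and if
`(K : s) = K` for all `s ∈ S`, this forces `K = M`.
-/

section Semiring

variable {R M M' : Type*} (A : Type*) [CommSemiring R] [CommSemiring A] [Algebra R A]
  [AddCommMonoid M] [Module R M] [AddCommMonoid M'] [Module R M'] [Module A M']
  [IsScalarTower R A M'] (S : Submonoid R) [IsLocalization S A]
  (f : M →ₗ[R] M') [IsLocalizedModule S f]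

theorem apply_mem_localized'_iff (K : Submodule R M) (x : M) :
    f x ∈ K.localized' A S f ↔ ∃ s : S, s • x ∈ K := by
  rw [Submodule.mem_localized']
  constructor
  · rintro ⟨k, hk, s, hks⟩
    have hfk : f k = f (s • x) := by
      rw [IsLocalizedModule.mk'_eq_iff.mp hks, f.map_smul_of_tower]
    obtain ⟨t, ht⟩ := IsLocalizedModule.exists_of_eq (S := S) hfk
    refine ⟨t * s, ?_⟩
    rw [mul_smul, ← ht]
    exact K.smul_of_tower_mem t hk
  · rintro ⟨s, hs⟩
    exact ⟨s • x, hs, s, IsLocalizedModule.mk'_eq_iff.mpr (f.map_smul_of_tower s x)⟩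

theorem localized'_eq_top_iff_s11 (K : Submodule R M) :
    K.localized' A S f = ⊤ ↔ ∀ x : M, ∃ s : S, s • x ∈ K := by
  have hgc := (Submodule.localized'gi A S f).gc
  rw [← top_le_iff, ← Submodule.localized'_top A S f, hgc, top_le_iff, Submodule.eq_top_iff']
  exact forall_congr' (apply_mem_localized'_iff A S f K)

theorem localized'_ne_top_of_forall_smul_mem_imp {K : Submodule R M} (hK : K ≠ ⊤)
    (hcol : ∀ s ∈ S, ∀ x : M, s • x ∈ K → x ∈ K) : K.localized' A S f ≠ ⊤ := by
  refine fun hKloc ↦ hK (K.eq_top_iff'.mpr fun x ↦ ?_)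
  obtain ⟨s, hsx⟩ := (localized'_eq_top_iff_s11 A S f K).mp hKloc x
  exact hcol s s.2 x hsx

end Semiring

theorem isSmall_iff_localized_general {R A M M' : Type*} [CommRing R] [CommRing A] [Algebra R A]
    [AddCommGroup M] [Module R M] [AddCommGroup M'] [Module R M'] [Module A M']
    [IsScalarTower R A M'] (S : Submonoid R) [IsLocalization S A]
    (f : M →ₗ[R] M') [IsLocalizedModule S f] (N : Submodule R M)
    (hproper : ∀ K : Submodule R M, K ≠ ⊤ → K.localized' A S f ≠ ⊤) :
    IsSmallSubmodule N ↔ IsSmallSubmodule (N.localized' A S f) := by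
  have gi := Submodule.localized'gi A S f
  have localized'_ne_top_iff (K : Submodule R M) : K.localized' A S f ≠ ⊤ ↔ K ≠ ⊤ :=
    ⟨fun hK hKtop ↦ hK (hKtop ▸ Submodule.localized'_top A S f), hproper K⟩
  simp only [IsSmallSubmodule, gi.l_surjective.forall, ← gi.gc.l_sup, localized'_ne_top_iff]

/-- Proposition 3.19 (1): let `S` be a multiplicative closed set in `R` and `N` a proper
submodule of `M`, and suppose `(K : s) = K` for every proper submodule `K` of `M` and every
`s ∈ S`, where `(K : s) = {x ∈ M : s • x ∈ K}`.  Then `N ≪ M` iff `N_S ≪ M_S`, where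
`N_S = N.localized S`. -/
theorem isSmall_iff_localized {R : Type*} [CommRing R] {M : Type*} [AddCommGroup M]
    [Module R M] (S : Submonoid R) (N : Submodule R M) (hN : N ≠ ⊤)
    (hcol : ∀ K : Submodule R M, K ≠ ⊤ → ∀ s ∈ S, {x : M | s • x ∈ K} = (K : Set M)) :
    IsSmallSubmodule N ↔ IsSmallSubmodule (N.localized S) :=
  isSmall_iff_localized_general S _ N fun K hK ↦
    localized'_ne_top_of_forall_smul_mem_imp _ S _ hK fun s hs _ hsx ↦ (hcol K hK s hs).subset hsx
end

section
/- Let R be a commutative ring with identity, M a unitary R-module, S a multiplicative closed set in R, and N a proper submodule of M. Suppose that for each proper submodule K of M and each s ∈ S, (K : s) = K. If N is a supplement of some submodule L of M, then N_S is a supplement of L_S in M_S; hence N is a supplemented submodule of M implies N_S is a supplemented submodule of M_S. -/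
/-- `X` is *small in* the submodule `L` (i.e. `X ≪ L`, viewing `X` as a submodule of `L`):
`X + Y ≠ L` for every submodule `Y` properly contained in `L`. -/
def IsSmallIn {R : Type*} [CommRing R] {M : Type*} [AddCommGroup M] [Module R M]
    (X L : Submodule R M) : Prop :=
  ∀ Y : Submodule R M, Y < L → X ⊔ Y ≠ L

/-- `N` is a *supplement* of `L` in `M` if `N + L = M` and `N ∩ L ≪ N`. -/
def IsSupplementOf {R : Type*} [CommRing R] {M : Type*} [AddCommGroup M] [Module R M]
    (N L : Submodule R M) : Prop :=
  N ⊔ L = ⊤ ∧ IsSmallIn (N ⊓ L) N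

/-!
Intersecting the contraction of a submodule `Y ≤ N_S` with `N` gives `Y₀ ≤ N` with `(Y₀)_S = Y`.
If `X_S + Y = N_S`, then `X + Y₀ ≤ N` has the same localization as `N`. When submodules of `N` are
saturated in `N`, this forces `X + Y₀ = N`, so smallness of `X` in `N` gives `Y₀ = N` and `Y = N_S`.
-/

section Semiring

variable {R A M M' : Type*} [CommSemiring R] [CommSemiring A] [Algebra R A]
  [AddCommMonoid M] [Module R M] [AddCommMonoid M'] [Module R M'] [Module A M']
  [IsScalarTower R A M'] (S : Submonoid R) [IsLocalization S A]
  (f : M →ₗ[R] M') [IsLocalizedModule S f]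

theorem map_mem_localized'_iff {K : Submodule R M} {x : M} :
    f x ∈ K.localized' A S f ↔ ∃ s ∈ S, s • x ∈ K := by
  constructor
  · rintro ⟨k, hk, s, hks⟩
    have hfk : f k = f (s • x) := by
      rwa [IsLocalizedModule.mk'_eq_iff, Submonoid.smul_def, ← map_smul] at hks
    obtain ⟨c, hc⟩ := IsLocalizedModule.exists_of_eq (S := S) hfk
    refine ⟨c * s, (c * s).2, ?_⟩
    rw [mul_smul]
    exact hc ▸ K.smul_of_tower_mem c hk
  · rintro ⟨s, hs, hsx⟩
    exact ⟨s • x, hsx, ⟨s, hs⟩, IsLocalizedModule.mk'_eq_iff.mpr (map_smul f s x)⟩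

theorem le_of_localized'_le {K N : Submodule R M}
    (hsat : ∀ s ∈ S, ∀ x ∈ N, s • x ∈ K → x ∈ K)
    (h : N.localized' A S f ≤ K.localized' A S f) : N ≤ K := by
  intro x hx
  have hfx : f x ∈ N.localized' A S f :=
    (map_mem_localized'_iff S f).mpr ⟨1, S.one_mem, N.smul_mem 1 hx⟩
  obtain ⟨s, hs, hsx⟩ := (map_mem_localized'_iff S f).mp (h hfx)
  exact hsat s hs x hx hsx

theorem localized'_sup (K L : Submodule R M) :
    (K ⊔ L).localized' A S f = K.localized' A S f ⊔ L.localized' A S f :=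
  (Submodule.localized'gi A S f).gc.l_sup

theorem localized'_inf_comap {N : Submodule R M} {Y : Submodule A M'}
    (hY : Y ≤ N.localized' A S f) :
    (N ⊓ (Y.restrictScalars R).comap f).localized' A S f = Y := by
  rw [Submodule.localized'_inf, (Submodule.localized'gi A S f).l_u_eq, inf_eq_right.mpr hY]

end Semiring

section Ring

variable {R A M M' : Type*} [CommRing R] [CommRing A] [Algebra R A]
  [AddCommGroup M] [Module R M] [AddCommGroup M'] [Module R M'] [Module A M']
  [IsScalarTower R A M'] (S : Submonoid R) [IsLocalization S A]
  (f : M →ₗ[R] M') [IsLocalizedModule S f]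

theorem IsSmallIn.localized' {X N : Submodule R M} (hX : IsSmallIn X N) (hXN : X ≤ N)
    (hN : ∀ K ≤ N, K.localized' A S f = N.localized' A S f → K = N) :
    IsSmallIn (X.localized' A S f) (N.localized' A S f) := by
  intro Y hY hsup
  obtain ⟨Y₀, hle, hY₀⟩ : ∃ Y₀ ≤ N, Y₀.localized' A S f = Y :=
    ⟨_, inf_le_left, localized'_inf_comap S f hY.le⟩
  have hlt : Y₀ < N := hle.lt_of_ne fun h => hY.ne (by rw [← hY₀, h])
  have hloc : (X ⊔ Y₀).localized' A S f = N.localized' A S f := by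
    rw [localized'_sup, hY₀, hsup]
  exact hX Y₀ hlt (hN _ (sup_le hXN hle) hloc)

theorem isSupplement_localized_general {N L : Submodule R M}
    (hsat : ∀ K ≤ N, ∀ s ∈ S, ∀ x ∈ N, s • x ∈ K → x ∈ K) (h : IsSupplementOf N L) :
    IsSupplementOf (N.localized' A S f) (L.localized' A S f) := by
  obtain ⟨hsup, hsmall⟩ := h
  constructor
  · rw [← localized'_sup, hsup, Submodule.localized'_top]
  · rw [← Submodule.localized'_inf]
    exact hsmall.localized' S f inf_le_left fun K hK hloc =>
      hK.antisymm (le_of_localized'_le S f (hsat K hK) hloc.ge)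

end Ring

/-- Proposition 3.19 (2): let `S` be a multiplicative closed set in `R` and `N` a proper
submodule of `M`, and suppose `(K : s) = K` for every proper submodule `K` of `M` and every
`s ∈ S`.  If `N` is a supplement of a submodule `L` of `M`, then `N_S` is a supplement of
`L_S` in `M_S`; hence if `N` is a supplemented submodule of `M` then `N_S` is a supplemented
submodule of `M_S`. -/
theorem isSupplement_localized {R : Type*} [CommRing R] {M : Type*} [AddCommGroup M]
    [Module R M] (S : Submonoid R) (N : Submodule R M) (hN : N ≠ ⊤)
    (hcol : ∀ K : Submodule R M, K ≠ ⊤ → ∀ s ∈ S, {x : M | s • x ∈ K} = (K : Set M)) :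
    (∀ L : Submodule R M, IsSupplementOf N L → IsSupplementOf (N.localized S) (L.localized S)) ∧
      ((∃ L : Submodule R M, IsSupplementOf N L) →
        ∃ L' : Submodule (Localization S) (LocalizedModule S M),
          IsSupplementOf (N.localized S) L') := by
  have hsat : ∀ K ≤ N, ∀ s ∈ S, ∀ x ∈ N, s • x ∈ K → x ∈ K := fun K hK s hs _ _ hx =>
    (hcol K (ne_top_of_le_ne_top hN hK) s hs).subset hx
  exact ⟨fun _ hL => isSupplement_localized_general S _ hsat hL,
    fun ⟨_, hL⟩ => ⟨_, isSupplement_localized_general S _ hsat hL⟩⟩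
end

section
/- Let R be a commutative ring with identity, M a unitary R-module, and S a multiplicative closed set in R. Suppose that for each proper submodule K of M and each s ∈ S, (K : s) = K. Then M is a hollow R-module if and only if M_S is a hollow R_S-module. -/
/-- A module `M` is *hollow* if every proper submodule of `M` is small in `M`. -/
def IsHollowModule (R M : Type*) [CommRing R] [AddCommGroup M] [Module R M] : Prop :=
  ∀ N : Submodule R M, N ≠ ⊤ → IsSmallSubmodule N

/-!
Localization is a surjection `K ↦ K_S` from the submodules of `M` onto those of `M_S` which
preserves sums, and `K_S = M_S` means that every element of `M` is multiplied into `K` by some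
`s ∈ S`. If this forces `K = M`, then `N + L = M` exactly when `N_S + L_S = M_S`, and
hollowness, which only speaks about which pairs of submodules sum to the whole module, transfers
in both directions.
-/

theorem isHollowModule_iff_forall_sup_eq_top {R M : Type*} [CommRing R] [AddCommGroup M]
    [Module R M] :
    IsHollowModule R M ↔ ∀ N L : Submodule R M, N ⊔ L = ⊤ → N = ⊤ ∨ L = ⊤ := by
  refine forall_congr' fun N ↦ forall_comm.trans (forall_congr' fun L ↦ ?_)
  tauto

section Localized

variable {R : Type*} [CommSemiring R] {M : Type*} [AddCommMonoid M] [Module R M]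
  (S : Submonoid R) (Rₛ : Type*) [CommSemiring Rₛ] [Algebra R Rₛ] [IsLocalization S Rₛ]
  {Mₛ : Type*} [AddCommMonoid Mₛ] [Module R Mₛ] [Module Rₛ Mₛ] [IsScalarTower R Rₛ Mₛ]
  (f : M →ₗ[R] Mₛ) [IsLocalizedModule S f]

theorem map_mem_localized'_iff_exists_smul_mem {K : Submodule R M} {x : M} :
    f x ∈ K.localized' Rₛ S f ↔ ∃ s ∈ S, s • x ∈ K := by
  rw [Submodule.mem_localized']
  constructor
  · rintro ⟨m, hm, s, hms⟩
    rw [IsLocalizedModule.mk'_eq_iff, Submonoid.smul_def, ← map_smul,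
      IsLocalizedModule.eq_iff_exists S f] at hms
    obtain ⟨t, ht⟩ := hms
    have hts : (t * s : R) • x = (t : R) • m := by rw [mul_smul]; exact ht.symm
    exact ⟨t * s, S.mul_mem t.2 s.2, hts ▸ K.smul_mem t hm⟩
  · rintro ⟨s, hs, hsx⟩
    exact ⟨s • x, hsx, ⟨s, hs⟩, IsLocalizedModule.mk'_eq_iff.mpr (map_smul f s x)⟩

theorem localized'_eq_top_iff_forall_exists_smul_mem {K : Submodule R M} :
    K.localized' Rₛ S f = ⊤ ↔ ∀ x, ∃ s ∈ S, s • x ∈ K := by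
  have gc := (Submodule.localized'gi Rₛ S f).gc
  calc K.localized' Rₛ S f = ⊤
    _ ↔ (⊤ : Submodule R M).localized' Rₛ S f ≤ K.localized' Rₛ S f := by
      rw [Submodule.localized'_top, top_le_iff]
    _ ↔ ∀ x, f x ∈ K.localized' Rₛ S f := by
      rw [gc.le_iff_le, top_le_iff, Submodule.eq_top_iff']; rfl
    _ ↔ ∀ x, ∃ s ∈ S, s • x ∈ K := by
      simp only [map_mem_localized'_iff_exists_smul_mem]

end Localized

theorem isHollow_iff_localized_general {R : Type*} [CommRing R] {M : Type*} [AddCommGroup M]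
    [Module R M] (S : Submonoid R) (Rₛ : Type*) [CommRing Rₛ] [Algebra R Rₛ]
    [IsLocalization S Rₛ] {Mₛ : Type*} [AddCommGroup Mₛ] [Module R Mₛ] [Module Rₛ Mₛ]
    [IsScalarTower R Rₛ Mₛ] (f : M →ₗ[R] Mₛ) [IsLocalizedModule S f]
    (eq_top : ∀ K : Submodule R M, (∀ x, ∃ s ∈ S, s • x ∈ K) → K = ⊤) :
    IsHollowModule R M ↔ IsHollowModule Rₛ Mₛ := by
  have gi := Submodule.localized'gi Rₛ S f
  have localized_eq_top_iff (K : Submodule R M) : K.localized' Rₛ S f = ⊤ ↔ K = ⊤ :=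
    ⟨fun hK ↦ eq_top K ((localized'_eq_top_iff_forall_exists_smul_mem S Rₛ f).mp hK),
      fun hK ↦ hK ▸ Submodule.localized'_top Rₛ S f⟩
  rw [isHollowModule_iff_forall_sup_eq_top, isHollowModule_iff_forall_sup_eq_top,
    gi.l_surjective.forall₂]
  simp only [← gi.gc.l_sup, localized_eq_top_iff]

/-- Proposition 3.19 (3): let `S` be a multiplicative closed set in `R`, and suppose
`(K : s) = K` for every proper submodule `K` of `M` and every `s ∈ S`.  Then `M` is a
hollow `R`-module iff `M_S` is a hollow `R_S`-module. -/
theorem isHollow_iff_localized {R : Type*} [CommRing R] {M : Type*} [AddCommGroup M]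
    [Module R M] (S : Submonoid R)
    (hcol : ∀ K : Submodule R M, K ≠ ⊤ → ∀ s ∈ S, {x : M | s • x ∈ K} = (K : Set M)) :
    IsHollowModule R M ↔ IsHollowModule (Localization S) (LocalizedModule S M) := by
  refine isHollow_iff_localized_general S _ (LocalizedModule.mkLinearMap S M) fun K hK ↦ ?_
  by_contra hne
  exact hne <| K.eq_top_iff'.mpr fun x ↦
    let ⟨s, hs, hsx⟩ := hK x
    (hcol K hne s hs).subset hsx
end
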